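/- arXiv:math/0701488 — 2 statements merged into one kernel-verified Lean document; each statement's English description precedes it below -/
import Mathlib

section
/- For every integer n ≥ 11 with gcd(n, 6) = 1, a 6-Mcycle of [n] exists. -/
/-- A `t`-Mcycle of `[n]`: a cyclic sequence of length `m = C(n+t-1, t)` of elements of
`[n]` (modeled as `Fin n`) such that every multiset of size `t` over `[n]` appears
exactly once among the `m` cyclic windows of length `t`. -/
def IsMcycle (n t : ℕ) (a : ZMod ((n + t - 1).choose t) → Fin n) : Prop :=
  ∀ s : Multiset (Fin n), Multiset.card s = t →
    ∃! i : ZMod ((n + t - 1).choose t),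
      (Multiset.range t).map (fun j => a (i + (j : ZMod ((n + t - 1).choose t)))) = s


theorem merge_cycles {E : Type*} [Fintype E] [DecidableEq E] (σ : Equiv.Perm E) (e e' : E)
    (h : ¬ σ.SameCycle e e') : (Equiv.swap e e' * σ).SameCycle e e' := by
  classical
  have hex : ∃ k : ℕ, 0 < k ∧ (σ ^ k) e = e :=
    ⟨orderOf σ, orderOf_pos σ, by rw [pow_orderOf_eq_one]; rfl⟩
  let k := Nat.find hex
  obtain ⟨hk0, hk⟩ := Nat.find_spec hex
  have hmin : ∀ j, j < k → 0 < j → (σ ^ j) e ≠ e := fun j hj h0 hje =>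
    Nat.find_min hex hj ⟨h0, hje⟩
  have key : ∀ j, j < k → ((Equiv.swap e e' * σ) ^ j) e = (σ ^ j) e := by
    intro j
    induction j with
    | zero => intro _; rfl
    | succ j ih =>
      intro hj
      have hs : σ ((σ ^ j) e) = (σ ^ (j + 1)) e := by rw [pow_succ', Equiv.Perm.mul_apply]
      rw [pow_succ', Equiv.Perm.mul_apply, ih (by omega), Equiv.Perm.mul_apply, hs]
      apply Equiv.swap_apply_of_ne_of_ne
      · exact hmin _ hj (by omega)
      · intro hh
        exact h ⟨((j + 1 : ℕ) : ℤ), by rw [zpow_natCast]; exact hh⟩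
  refine ⟨(k : ℕ), ?_⟩
  obtain ⟨j, hj⟩ : ∃ j, k = j + 1 := ⟨k - 1, by change k = k - 1 + 1; omega⟩
  have hk' : (σ ^ k) e = e := hk
  have hs : σ ((σ ^ j) e) = (σ ^ (j + 1)) e := by rw [pow_succ', Equiv.Perm.mul_apply]
  rw [zpow_natCast, hj, pow_succ', Equiv.Perm.mul_apply, key j (by omega), Equiv.Perm.mul_apply,
    hs, ← hj, hk', Equiv.swap_apply_left]

theorem merge_mono {E : Type*} [Fintype E] [DecidableEq E] (σ : Equiv.Perm E) (e e' : E)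
    (h : ¬ σ.SameCycle e e') (x y : E) (hxy : σ.SameCycle x y) :
    (Equiv.swap e e' * σ).SameCycle x y := by
  have hm := merge_cycles σ e e' h
  have step : ∀ z, (Equiv.swap e e' * σ).SameCycle z (σ z) := by
    intro z
    have h1 : (Equiv.swap e e' * σ).SameCycle z ((Equiv.swap e e' * σ) z) := ⟨1, by simp⟩
    rw [Equiv.Perm.mul_apply] at h1
    by_cases ha : σ z = e
    · rw [ha, Equiv.swap_apply_left] at h1
      rw [ha]; exact h1.trans hm.symm
    · by_cases hb : σ z = e'
      · rw [hb, Equiv.swap_apply_right] at h1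
        rw [hb]; exact h1.trans hm
      · rwa [Equiv.swap_apply_of_ne_of_ne ha hb] at h1
  obtain ⟨k, -, hk⟩ := hxy.exists_pow_eq'
  rw [← hk]
  generalize k = k
  clear hk
  induction k with
  | zero => exact Equiv.Perm.SameCycle.refl _ _
  | succ j ih =>
    rw [pow_succ', Equiv.Perm.mul_apply]
    exact ih.trans (step _)

/-- Directed Euler circuits, for a graph whose edges are decomposed into closed trails by `τ`. -/
theorem euler_circuit {E V : Type*} [Fintype E] [DecidableEq E] (tail : E → V)
    (τ : Equiv.Perm E) (e0 : E)
    (conn : ∀ S : Set E, e0 ∈ S → (∀ e, e ∈ S → τ e ∈ S) →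
      (∀ e e', tail e = tail e' → e ∈ S → e' ∈ S) → ∀ e, e ∈ S) :
    ∃ σ : Equiv.Perm E, (∀ e, tail (σ e) = tail (τ e)) ∧ ∀ e, σ.SameCycle e0 e := by
  classical
  let T : Finset (Equiv.Perm E) := Finset.univ.filter (fun σ => ∀ e, tail (σ e) = tail (τ e))
  have hT : T.Nonempty := ⟨τ, by simp [T]⟩
  obtain ⟨σ, hσ, hmax⟩ := Finset.exists_max_image T
    (fun σ => (Finset.univ.filter (fun e => σ.SameCycle e0 e)).card) hT
  have hσ' : ∀ e, tail (σ e) = tail (τ e) := by simpa [T] using hσ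
  refine ⟨σ, hσ', ?_⟩
  by_cases hcl : ∀ e e', tail e = tail e' → σ.SameCycle e0 e → σ.SameCycle e0 e'
  · refine conn {e | σ.SameCycle e0 e} (Equiv.Perm.SameCycle.refl _ _) ?_ hcl
    intro e he
    refine hcl (σ e) (τ e) (hσ' e) ?_
    exact Equiv.Perm.sameCycle_apply_right.2 he
  · exfalso
    push Not at hcl
    obtain ⟨e, e', htt, he, he'⟩ := hcl
    have hne : ¬ σ.SameCycle e e' := fun hh => he' (he.trans hh)
    have hmem : Equiv.swap e e' * σ ∈ T := by
      simp only [T, Finset.mem_filter, Finset.mem_univ, true_and, Equiv.Perm.mul_apply]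
      intro x
      rw [← hσ' x]
      by_cases ha : σ x = e
      · rw [ha, Equiv.swap_apply_left, htt]
      · by_cases hb : σ x = e'
        · rw [hb, Equiv.swap_apply_right, htt]
        · rw [Equiv.swap_apply_of_ne_of_ne ha hb]
    have := hmax _ hmem
    refine absurd this (not_le.2 (Finset.card_lt_card ?_))
    rw [Finset.ssubset_iff_of_subset]
    · refine ⟨e', ?_, ?_⟩
      · simp only [Finset.mem_filter, Finset.mem_univ, true_and]
        exact (merge_mono σ e e' hne _ _ he).trans (merge_cycles σ e e' hne)
      · simpa using he'
    · intro x hx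
      simp only [Finset.mem_filter, Finset.mem_univ, true_and] at hx ⊢
      exact merge_mono σ e e' hne _ _ hx

theorem exists_mult_one (n : ℕ) (h2 : n % 2 ≠ 0) (h3 : n % 3 ≠ 0) (D : Multiset ℕ)
    (hc : D.card = 6) (hs : D.sum = n) : ∃ v, D.count v = 1 := by
  by_contra hcon
  push Not at hcon
  have hcon' : ∀ v ∈ D, v ∈ D.erase v := by
    intro v hv
    rw [← Multiset.count_pos, Multiset.count_erase_self]
    have := Multiset.count_pos.2 hv
    have := hcon v
    omega
  obtain ⟨a, haD⟩ := Multiset.card_pos_iff_exists_mem.1 (show 0 < D.card by omega)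
  obtain ⟨D1, rfl⟩ := Multiset.exists_cons_of_mem haD
  have ha := hcon' a (by simp)
  rw [Multiset.erase_cons_head] at ha
  obtain ⟨D2, rfl⟩ := Multiset.exists_cons_of_mem ha
  simp only [Multiset.card_cons] at hc
  have hc4 : D2.card = 4 := by omega
  obtain ⟨p, q, r, s, rfl⟩ : ∃ p q r s, D2 = {p, q, r, s} := Multiset.card_eq_four.1 hc4
  have hp : p = a ∨ p = q ∨ p = r ∨ p = s := by
    by_contra hh; push Not at hh
    apply hcon p
    simp [Multiset.count_cons, hh, Multiset.count_singleton]
  have hq : q = a ∨ q = p ∨ q = r ∨ q = s := by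
    by_contra hh; push Not at hh
    apply hcon q
    simp [Multiset.count_cons, hh, Multiset.count_singleton]
  have hr : r = a ∨ r = p ∨ r = q ∨ r = s := by
    by_contra hh; push Not at hh
    apply hcon r
    simp [Multiset.count_cons, hh, Multiset.count_singleton]
  have hs' : s = a ∨ s = p ∨ s = q ∨ s = r := by
    by_contra hh; push Not at hh
    apply hcon s
    simp [Multiset.count_cons, hh, Multiset.count_singleton]
  have hsum : a + (a + (p + (q + (r + s)))) = n := by simpa using hs
  clear hs hcon hcon' ha hc hc4
  rcases hp with h | h | h | h <;> subst h <;> rcases hq with h | h | h | h <;> try subst h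
  all_goals rcases hr with h | h | h | h <;> try subst h
  all_goals omega

theorem five_class (R : Multiset ℕ) (hc : R.card = 5) (h : ∀ v ∈ R, R.count v ≠ 1) :
    (∃ M, R = {M, M, M, M, M}) ∨ ∃ M x, M ≠ x ∧ R = {M, M, M, x, x} := by
  have hcon' : ∀ v ∈ R, v ∈ R.erase v := by
    intro v hv
    rw [← Multiset.count_pos, Multiset.count_erase_self]
    have := Multiset.count_pos.2 hv
    have := h v hv
    omega
  obtain ⟨a, haD⟩ := Multiset.card_pos_iff_exists_mem.1 (show 0 < R.card by omega)
  obtain ⟨D1, rfl⟩ := Multiset.exists_cons_of_mem haD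
  have ha := hcon' a (by simp)
  rw [Multiset.erase_cons_head] at ha
  obtain ⟨D2, rfl⟩ := Multiset.exists_cons_of_mem ha
  simp only [Multiset.card_cons] at hc
  have hc3 : D2.card = 3 := by omega
  obtain ⟨p, q, r, rfl⟩ : ∃ p q r, D2 = {p, q, r} := Multiset.card_eq_three.1 hc3
  have hp : p = a ∨ p = q ∨ p = r := by
    by_contra hh; push Not at hh
    apply h p (by simp)
    simp [Multiset.count_cons, hh, Multiset.count_singleton]
  have hq : q = a ∨ q = p ∨ q = r := by
    by_contra hh; push Not at hh
    apply h q (by simp)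
    simp [Multiset.count_cons, hh, Multiset.count_singleton]
  have hr : r = a ∨ r = p ∨ r = q := by
    by_contra hh; push Not at hh
    apply h r (by simp)
    simp [Multiset.count_cons, hh, Multiset.count_singleton]
  clear h hcon' ha hc hc3
  have fin : (p = a ∧ q = a ∧ r = a) ∨ (p ≠ a ∧ q = p ∧ r = p) ∨ (p = a ∧ q ≠ a ∧ r = q) ∨
    (q = a ∧ p ≠ a ∧ r = p) ∨ (r = a ∧ p ≠ a ∧ q = p) := by omega
  rcases fin with ⟨rfl, rfl, rfl⟩ | ⟨h, rfl, rfl⟩ | ⟨rfl, h, rfl⟩ | ⟨rfl, h, rfl⟩ | ⟨rfl, h, rfl⟩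
  · exact Or.inl ⟨_, rfl⟩
  · refine Or.inr ⟨r, a, h, ?_⟩
    ext v; simp [Multiset.count_cons, Multiset.count_singleton]; omega
  · exact Or.inr ⟨p, r, h.symm, rfl⟩
  · refine Or.inr ⟨q, r, h.symm, ?_⟩
    ext v; simp [Multiset.count_cons, Multiset.count_singleton]; omega
  · refine Or.inr ⟨r, q, h.symm, ?_⟩
    ext v; simp [Multiset.count_cons, Multiset.count_singleton]; omega

/-- The rule selecting one difference of multiplicity one out of each multiset of differences. -/
theorem exists_sel (n : ℕ) (h2 : n % 2 ≠ 0) (h3 : n % 3 ≠ 0) :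
    ∃ sel : Multiset ℕ → ℕ,
      (∀ D : Multiset ℕ, D.card = 6 → D.sum = n → D.count (sel D) = 1) ∧
      (∀ (D : Multiset ℕ) (v : ℕ) (R : Multiset ℕ), D = v ::ₘ R → (∀ w ∈ R, w < v) → 0 ∈ R → sel D = v) ∧
      (∀ (D : Multiset ℕ) (M : ℕ), D = {M + 1, M, 1, 1, 1, 1} → 3 ≤ M → sel D = M) ∧
      (∀ D : Multiset ℕ, D.card = 6 → D.sum = n → sel D = 0 → ∀ v, D.count v = 1 → v = 0) := by
  suffices H : ∀ D : Multiset ℕ, ∃ s : ℕ, (D.card = 6 → D.sum = n → D.count s = 1) ∧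
      (∀ v R, D = v ::ₘ R → (∀ w ∈ R, w < v) → 0 ∈ R → s = v) ∧
      (∀ M, D = {M + 1, M, 1, 1, 1, 1} → 3 ≤ M → s = M) ∧
      (D.card = 6 → D.sum = n → s = 0 → ∀ v, D.count v = 1 → v = 0) by
    choose sel hsel using H
    exact ⟨sel, fun D => (hsel D).1, fun D => (hsel D).2.1, fun D => (hsel D).2.2.1,
      fun D => (hsel D).2.2.2⟩
  intro D
  by_cases h1 : ∃ v R, D = v ::ₘ R ∧ (∀ w ∈ R, w < v) ∧ 0 ∈ R
  · obtain ⟨v, R, rfl, hR, h0⟩ := h1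
    have hv := hR 0 h0
    refine ⟨v, ?_, ?_, ?_, ?_⟩
    · intro _ _
      rw [Multiset.count_cons_self, Multiset.count_eq_zero_of_notMem]
      intro hh; exact absurd (hR v hh) (lt_irrefl _)
    · intro v' R' hE hR' _
      by_contra hne
      have a1 : v ∈ v' ::ₘ R' := hE ▸ Multiset.mem_cons_self v R
      have a2 : v' ∈ v ::ₘ R := hE ▸ Multiset.mem_cons_self v' R'
      rw [Multiset.mem_cons] at a1 a2
      have b1 := hR' v (a1.resolve_left hne)
      have b2 := hR v' (a2.resolve_left (Ne.symm hne))
      omega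
    · intro M hM hM3
      have : 0 ∈ v ::ₘ R := Multiset.mem_cons_of_mem h0
      rw [hM] at this
      simp at this
      omega
    · intro _ _ hh; omega
  · by_cases h4 : ∃ M, D = {M + 1, M, 1, 1, 1, 1} ∧ 3 ≤ M
    · obtain ⟨M, rfl, hM⟩ := h4
      refine ⟨M, ?_, ?_, ?_, ?_⟩
      · intro _ _
        simp [Multiset.count_cons, Multiset.count_singleton]; omega
      · intro v R a b c; exact absurd ⟨v, R, a, b, c⟩ h1
      · intro M' hE hM'
        have a1 : M ∈ ({M' + 1, M', 1, 1, 1, 1} : Multiset ℕ) := by rw [← hE]; simp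
        have a2 : M' ∈ ({M + 1, M, 1, 1, 1, 1} : Multiset ℕ) := by rw [hE]; simp
        simp at a1 a2
        omega
      · intro _ _ hh; omega
    · by_cases h5 : ∃ v, v ≠ 0 ∧ D.count v = 1
      · obtain ⟨v, hv, hv1⟩ := h5
        exact ⟨v, fun _ _ => hv1, fun v R a b c => absurd ⟨v, R, a, b, c⟩ h1,
          fun M a b => absurd ⟨M, a, b⟩ h4, fun _ _ hh => absurd hh hv⟩
      · refine ⟨0, ?_, fun v R a b c => absurd ⟨v, R, a, b, c⟩ h1,
          fun M a b => absurd ⟨M, a, b⟩ h4, ?_⟩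
        · intro hc hs
          obtain ⟨v, hv⟩ := exists_mult_one n h2 h3 D hc hs
          by_cases hv0 : v = 0
          · rwa [hv0] at hv
          · exact absurd ⟨v, hv0, hv⟩ h5
        · intro _ _ _ v hv
          by_contra hv0
          exact h5 ⟨v, hv0, hv⟩

theorem conn_P (n : ℕ) (hn : 11 ≤ n) (h2 : n % 2 ≠ 0)
    (sel : Multiset ℕ → ℕ)
    (s1 : ∀ D : Multiset ℕ, D.card = 6 → D.sum = n → D.count (sel D) = 1)
    (s2 : ∀ (D : Multiset ℕ) (v : ℕ) (R : Multiset ℕ), D = v ::ₘ R → (∀ w ∈ R, w < v) →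
      0 ∈ R → sel D = v)
    (s3 : ∀ (D : Multiset ℕ) (M : ℕ), D = {M + 1, M, 1, 1, 1, 1} → 3 ≤ M → sel D = M)
    (s4 : ∀ D : Multiset ℕ, D.card = 6 → D.sum = n → sel D = 0 → ∀ v, D.count v = 1 → v = 0)
    (P : ℕ → ℕ → ℕ → ℕ → Prop) (h0 : P 0 0 0 0)
    (step : ∀ a b c d e f, a + b + c + d + e + f = n → sel {a, b, c, d, e, f} = f →
      (P a b c d ↔ P b c d e)) :
    ∀ a b c d e f, a + b + c + d + e + f = n → sel {a, b, c, d, e, f} = f → P a b c d := by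
  have L0 : ∀ a b c d m, a + b + c + d + m = n → a < m → b < m → c < m → d < m →
      (P a b c d ↔ P b c d 0) := by
    intro a b c d m hs ha hb hc hd
    refine step a b c d 0 m (by omega) ?_
    refine s2 _ m {a, b, c, d, 0} ?_ ?_ (by simp)
    · simp only [Multiset.insert_eq_cons, ← Multiset.singleton_add]; abel
    · intro w hw
      simp at hw
      omega
  have L1 : ∀ a b c d m, a + b + c + d + m = n → a < m → b < m → c < m → d < m →
      P a b c d := by
    intro a b c d m hs ha hb hc hd
    rw [L0 a b c d m, L0 b c d 0 (m + a), L0 c d 0 0 (m + a + b), L0 d 0 0 0 (m + a + b + c)]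
    · exact h0
    all_goals omega
  have L3 : ∀ a b c d e f y, a + b + c + d + e + f = n → sel {a, b, c, d, e, f} = f →
      y ∈ ({a, b, c, d, e} : Multiset ℕ) →
      (∀ p q r s, ({p, q, r, s, y} : Multiset ℕ) = {a, b, c, d, e} → P p q r s) →
      P a b c d := by
    intro a b c d e f y hs hsel hy hP
    have e1 : ({b, c, d, e, a} : Multiset ℕ) = {a, b, c, d, e} := by
      simp only [Multiset.insert_eq_cons, ← Multiset.singleton_add]; abel
    have e2 : ({c, d, e, a, b} : Multiset ℕ) = {a, b, c, d, e} := by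
      simp only [Multiset.insert_eq_cons, ← Multiset.singleton_add]; abel
    have e3 : ({d, e, a, b, c} : Multiset ℕ) = {a, b, c, d, e} := by
      simp only [Multiset.insert_eq_cons, ← Multiset.singleton_add]; abel
    have e4 : ({e, a, b, c, d} : Multiset ℕ) = {a, b, c, d, e} := by
      simp only [Multiset.insert_eq_cons, ← Multiset.singleton_add]; abel
    have f1 : ({b, c, d, e, a, f} : Multiset ℕ) = {a, b, c, d, e, f} := by
      simp only [Multiset.insert_eq_cons, ← Multiset.singleton_add]; abel
    have f2 : ({c, d, e, a, b, f} : Multiset ℕ) = {a, b, c, d, e, f} := by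
      simp only [Multiset.insert_eq_cons, ← Multiset.singleton_add]; abel
    have f3 : ({d, e, a, b, c, f} : Multiset ℕ) = {a, b, c, d, e, f} := by
      simp only [Multiset.insert_eq_cons, ← Multiset.singleton_add]; abel
    have g0 := step a b c d e f hs hsel
    have g1 := step b c d e a f (by omega) (by rw [f1, hsel])
    have g2 := step c d e a b f (by omega) (by rw [f2, hsel])
    have g3 := step d e a b c f (by omega) (by rw [f3, hsel])
    simp only [Multiset.insert_eq_cons, Multiset.mem_cons, Multiset.mem_singleton] at hy
    rcases hy with rfl | rfl | rfl | rfl | rfl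
    · exact g0.2 (hP _ _ _ _ e1)
    · exact g0.2 (g1.2 (hP _ _ _ _ e2))
    · exact g0.2 (g1.2 (g2.2 (hP _ _ _ _ e3)))
    · exact g0.2 (g1.2 (g2.2 (g3.2 (hP _ _ _ _ e4))))
    · exact hP _ _ _ _ rfl
  have L4 : ∀ a b c d e f, 0 < f → a + b + c + d + e + f = n → sel {a, b, c, d, e, f} = f →
      P a b c d := by
    intro a b c d e f hf hs hsel
    obtain ⟨y, hy, hmax⟩ := Finset.exists_max_image (({a, b, c, d, e} : Multiset ℕ).toFinset) id
      ⟨a, by simp⟩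
    refine L3 a b c d e f y hs hsel (by simpa using hy) ?_
    intro p q r s hpq
    have hle : ∀ w ∈ ({p, q, r, s, y} : Multiset ℕ), w ≤ y := by
      intro w hw
      rw [hpq] at hw
      exact hmax w (Multiset.mem_toFinset.2 hw)
    have hsum := congrArg Multiset.sum hpq
    simp at hsum hle
    apply L1 p q r s (y + f) <;> omega
  have L6 : ∀ p q r s u w, p + q + r + s + u + w = n → 0 < u → 0 < w →
      (∀ v ∈ ({p, q, r, s} : Multiset ℕ), 2 ≤ ({p, q, r, s} : Multiset ℕ).count v) →
      P p q r s := by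
    intro p q r s u w hs hu hw hcount
    have hc := s1 {p, q, r, s, u, w} (by simp) (by simp; omega)
    generalize hx : sel {p, q, r, s, u, w} = x at hc
    have hD : ({p, q, r, s, u, w} : Multiset ℕ) = {p, q, r, s} + {u, w} := rfl
    have hxm : x ∈ ({p, q, r, s, u, w} : Multiset ℕ) := by
      rw [← Multiset.count_pos]; omega
    rw [hD, Multiset.count_add] at hc
    rw [hD, Multiset.mem_add] at hxm
    rcases hxm with hxm | hxm
    · have := hcount x hxm; omega
    · simp only [Multiset.insert_eq_cons, Multiset.mem_cons, Multiset.mem_singleton] at hxm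
      rcases hxm with rfl | rfl
      · refine L4 p q r s w x hu (by omega) ?_
        have hE : ({p, q, r, s, w, x} : Multiset ℕ) = {p, q, r, s, x, w} := by
          simp only [Multiset.insert_eq_cons, ← Multiset.singleton_add]; abel
        rw [hE]
        exact hx
      · exact L4 p q r s u x hw (by omega) hx
  intro a b c d e f hs hsel
  rcases Nat.eq_zero_or_pos f with rfl | hf
  swap
  · exact L4 a b c d e f hf hs hsel
  have hD : ({a, b, c, d, e, 0} : Multiset ℕ) = {a, b, c, d, e} + {0} := rfl
  have hc0 := s1 {a, b, c, d, e, 0} (by simp) (by simp; omega)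
  rw [hsel, hD, Multiset.count_add, Multiset.count_singleton_self] at hc0
  have hz : 0 ∉ ({a, b, c, d, e} : Multiset ℕ) := by
    rw [← Multiset.count_eq_zero]; omega
  have hR : ∀ v ∈ ({a, b, c, d, e} : Multiset ℕ), ({a, b, c, d, e} : Multiset ℕ).count v ≠ 1 := by
    intro v hv h1
    have hv0 : v ≠ 0 := by rintro rfl; exact hz hv
    apply hv0
    apply s4 {a, b, c, d, e, 0} (by simp) (by simp; omega) hsel v
    rw [hD, Multiset.count_add, h1, Multiset.count_singleton, if_neg hv0]
  have hsum : ({a, b, c, d, e} : Multiset ℕ).sum = n := by simp; omega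
  rcases five_class _ (by simp) hR with ⟨M, hM⟩ | ⟨M, x, hMx, hM⟩
  · rw [hM] at hsum
    simp at hsum
    refine L3 a b c d e 0 M hs hsel (by rw [hM]; simp) ?_
    intro p q r s hpq
    have hpq' : ({p, q, r, s} : Multiset ℕ) = {M, M, M, M} := by
      have : M ::ₘ ({p, q, r, s} : Multiset ℕ) = M ::ₘ {M, M, M, M} := by
        change _ = ({M, M, M, M, M} : Multiset ℕ)
        rw [← hM, ← hpq]
        simp only [Multiset.insert_eq_cons, ← Multiset.singleton_add]; abel
      exact (Multiset.cons_inj_right _).1 this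
    have hsum' := congrArg Multiset.sum hpq'
    simp at hsum'
    refine L6 p q r s 1 (M - 1) (by omega) (by omega) (by omega) ?_
    rw [hpq']
    intro v hv
    simp at hv
    simp [hv]
  · rw [hM] at hsum hz
    simp at hsum hz
    by_cases hM1 : M = 1
    · subst hM1
      refine L3 a b c d e 0 x hs hsel (by rw [hM]; simp) ?_
      intro p q r s hpq
      have hpq' : ({p, q, r, s} : Multiset ℕ) = {1, 1, 1, x} := by
        have : x ::ₘ ({p, q, r, s} : Multiset ℕ) = x ::ₘ {1, 1, 1, x} := by
          trans ({1, 1, 1, x, x} : Multiset ℕ)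
          · rw [← hM, ← hpq]
            simp only [Multiset.insert_eq_cons, ← Multiset.singleton_add]; abel
          · simp only [Multiset.insert_eq_cons, ← Multiset.singleton_add]; abel
        exact (Multiset.cons_inj_right _).1 this
      have hsum' := congrArg Multiset.sum hpq'
      simp at hsum'
      obtain ⟨z, rfl⟩ : ∃ z, x = z + 1 := ⟨x - 1, by omega⟩
      refine L4 p q r s 1 z (by omega) (by omega) (s3 _ z ?_ (by omega))
      have hD' : ({p, q, r, s, 1, z} : Multiset ℕ) = {p, q, r, s} + {1, z} := rfl
      rw [hD', hpq']
      simp only [Multiset.insert_eq_cons, ← Multiset.singleton_add]; abel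
    · refine L3 a b c d e 0 M hs hsel (by rw [hM]; simp) ?_
      intro p q r s hpq
      have hpq' : ({p, q, r, s} : Multiset ℕ) = {M, M, x, x} := by
        have : M ::ₘ ({p, q, r, s} : Multiset ℕ) = M ::ₘ {M, M, x, x} := by
          change _ = ({M, M, M, x, x} : Multiset ℕ)
          rw [← hM, ← hpq]
          simp only [Multiset.insert_eq_cons, ← Multiset.singleton_add]; abel
        exact (Multiset.cons_inj_right _).1 this
      have hsum' := congrArg Multiset.sum hpq'
      simp at hsum'
      refine L6 p q r s 1 (M - 1) (by omega) (by omega) (by omega) ?_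
      rw [hpq']
      intro v hv
      simp at hv
      rcases hv with rfl | rfl
      · simp
      · simp [Multiset.count_cons, hMx, hMx.symm]

theorem card_comp (n : ℕ) :
    (Finset.piAntidiag (Finset.univ : Finset (Fin 6)) n).card = (n + 5).choose 5 := by
  rw [← Finset.map_sym_eq_piAntidiag, Finset.card_map, Finset.sym_univ, Finset.card_univ,
    Sym.card_sym_eq_choose, Fintype.card_fin]
  rw [show 6 + n - 1 = n + 5 by omega]
  exact Nat.choose_symm_add

theorem card_sel (n : ℕ) (sel : Multiset ℕ → ℕ)
    (s1 : ∀ D : Multiset ℕ, D.card = 6 → D.sum = n → D.count (sel D) = 1) :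
    6 * ((Finset.piAntidiag (Finset.univ : Finset (Fin 6)) n).filter
      (fun D => sel (Finset.univ.val.map D) = D 5)).card = (n + 5).choose 5 := by
  classical
  rw [← card_comp]
  have h1 : ∀ D ∈ Finset.piAntidiag (Finset.univ : Finset (Fin 6)) n,
      ((Finset.univ : Finset (Fin 6)).filter
        (fun j => sel (Finset.univ.val.map D) = D j)).card = 1 := by
    intro D hD
    rw [Finset.mem_piAntidiag] at hD
    have := s1 (Finset.univ.val.map D) (by simp) hD.1
    rw [Multiset.count_map] at this
    exact this
  rw [Finset.card_eq_sum_ones (Finset.piAntidiag _ n), ← Finset.sum_congr rfl h1]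
  simp_rw [Finset.card_filter]
  rw [Finset.sum_comm]
  have h2 : ∀ j : Fin 6, ∑ D ∈ Finset.piAntidiag (Finset.univ : Finset (Fin 6)) n,
      (if sel (Finset.univ.val.map D) = D j then 1 else 0) =
      ∑ D ∈ Finset.piAntidiag (Finset.univ : Finset (Fin 6)) n,
      (if sel (Finset.univ.val.map D) = D 5 then 1 else 0) := by
    intro j
    refine Finset.sum_nbij' (fun D => D ∘ Equiv.swap j 5) (fun D => D ∘ Equiv.swap j 5)
      ?_ ?_ ?_ ?_ ?_
    · intro D hD
      simp only [Finset.mem_piAntidiag] at hD ⊢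
      exact ⟨by rw [← hD.1]; exact Equiv.sum_comp _ _, by simp⟩
    · intro D hD
      simp only [Finset.mem_piAntidiag] at hD ⊢
      exact ⟨by rw [← hD.1]; exact Equiv.sum_comp _ _, by simp⟩
    · intro D _; ext i; simp
    · intro D _; ext i; simp
    · intro D _
      have : (Finset.univ : Finset (Fin 6)).val.map (D ∘ Equiv.swap j 5) =
          Finset.univ.val.map D := by
        rw [← Multiset.map_map]
        congr 1
        exact congrArg Finset.val (Finset.map_univ_equiv (Equiv.swap j 5))
      rw [this]
      simp
  rw [Finset.sum_congr rfl (fun j _ => h2 j)]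
  simp

theorem card_edges (n : ℕ) (hn : 0 < n) (g : ℕ) (h : 6 * g = (n + 5).choose 5) :
    n * g = (n + 6 - 1).choose 6 := by
  have := Nat.choose_succ_right_eq (n + 5) 5
  rw [show n + 5 - 5 = n by omega] at this
  rw [show n + 6 - 1 = n + 5 by omega]
  rw [← h] at this
  nlinarith

theorem univ_map_six {α : Type*} (D : Fin 6 → α) :
    (Finset.univ : Finset (Fin 6)).val.map D = {D 0, D 1, D 2, D 3, D 4, D 5} := by
  rw [Fin.univ_val_map]
  simp [List.ofFn_succ]
  rfl

/-- The admissible difference vectors: the last entry is the selected one. -/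
def diffs (n : ℕ) (sel : Multiset ℕ → ℕ) : Finset (Fin 6 → ℕ) :=
  (Finset.piAntidiag (Finset.univ : Finset (Fin 6)) n).filter
      (fun D => sel (Finset.univ.val.map D) = D 5)

theorem mem_diffs (n : ℕ) (sel : Multiset ℕ → ℕ) (D : Fin 6 → ℕ) :
    D ∈ diffs n sel ↔ D 0 + D 1 + D 2 + D 3 + D 4 + D 5 = n ∧
      sel {D 0, D 1, D 2, D 3, D 4, D 5} = D 5 := by
  unfold diffs
  rw [Finset.mem_filter, Finset.mem_piAntidiag, Fin.sum_univ_six, univ_map_six,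
    and_iff_left (fun i _ => Finset.mem_univ i)]

/-- The window (up to order) of an edge. -/
def win {n : ℕ} (x : ZMod n) (a b c d e : ℕ) : Multiset (ZMod n) :=
  {x, x + a, x + a + b, x + a + b + c, x + a + b + c + d, x + a + b + c + d + e}

theorem win_rot {n : ℕ} (x : ZMod n) (a b c d e f : ℕ) (h : a + b + c + d + e + f = n) :
    win (x + (a : ZMod n)) b c d e f = win x a b c d e := by
  have h0 : (a + b + c + d + e + f : ZMod n) = 0 := by
    have : ((a + b + c + d + e + f : ℕ) : ZMod n) = 0 := by rw [h]; exact ZMod.natCast_self n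
    simpa using this
  have h1 : x + a + b + c + d + e + f = x := by linear_combination h0
  unfold win
  rw [h1]
  simp only [Multiset.insert_eq_cons, ← Multiset.singleton_add]; abel

theorem win_surj (n : ℕ) (hn : 0 < n) (sel : Multiset ℕ → ℕ)
    (s1 : ∀ D : Multiset ℕ, D.card = 6 → D.sum = n → D.count (sel D) = 1)
    (s : Multiset (ZMod n)) (hs : s.card = 6) :
    ∃ (x : ZMod n) (a b c d e f : ℕ), a + b + c + d + e + f = n ∧
      sel {a, b, c, d, e, f} = f ∧ win x a b c d e = s := by
  have : NeZero n := ⟨hn.ne'⟩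
  have hT : ∃ a b c d e f : ℕ, a ≤ b ∧ b ≤ c ∧ c ≤ d ∧ d ≤ e ∧ e ≤ f ∧ f < n ∧
      s.map ZMod.val = {a, b, c, d, e, f} := by
    have hl : ((s.map ZMod.val).sort (· ≤ ·)).length = 6 := by simp [hs]
    have hsort := Multiset.pairwise_sort (s.map ZMod.val) (· ≤ ·)
    have hcoe := Multiset.sort_eq (s.map ZMod.val) (· ≤ ·)
    have hlt : ∀ w ∈ s.map ZMod.val, w < n := by
      intro w hw
      obtain ⟨z, -, rfl⟩ := Multiset.mem_map.1 hw
      exact ZMod.val_lt z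
    generalize (s.map ZMod.val).sort (· ≤ ·) = l at *
    match l, hl with
    | [a, b, c, d, e, f], _ =>
      simp at hsort
      refine ⟨a, b, c, d, e, f, by omega, by omega, by omega, by omega, by omega, ?_, ?_⟩
      · apply hlt; rw [← hcoe]; simp
      · rw [← hcoe]; rfl
  obtain ⟨a, b, c, d, e, f, hab, hbc, hcd, hde, hef, hfn, hm⟩ := hT
  have hs' : s = ({a, b, c, d, e, f} : Multiset ℕ).map (Nat.cast : ℕ → ZMod n) := by
    rw [← hm, Multiset.map_map]
    conv_lhs => rw [← Multiset.map_id s]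
    apply Multiset.map_congr rfl
    intro z _
    simp
  obtain ⟨p, rfl⟩ := Nat.exists_eq_add_of_le hab
  obtain ⟨q, rfl⟩ := Nat.exists_eq_add_of_le hbc
  obtain ⟨r, rfl⟩ := Nat.exists_eq_add_of_le hcd
  obtain ⟨t, rfl⟩ := Nat.exists_eq_add_of_le hde
  obtain ⟨u, rfl⟩ := Nat.exists_eq_add_of_le hef
  obtain ⟨v, hv⟩ : ∃ v, p + q + r + t + u + v = n := ⟨n - (p + q + r + t + u), by omega⟩
  have w0 : win (a : ZMod n) p q r t u = s := by
    rw [hs']; simp [win]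
  have w1 : win ((a : ZMod n) + (p : ZMod n)) q r t u v = s := (win_rot _ _ _ _ _ _ _ hv).trans w0
  have w2 : win ((a : ZMod n) + (p : ZMod n) + (q : ZMod n)) r t u v p = s := by
    exact (win_rot _ _ _ _ _ _ _ (by omega)).trans w1
  have w3 : win ((a : ZMod n) + (p : ZMod n) + (q : ZMod n) + (r : ZMod n)) t u v p q = s := by
    exact (win_rot _ _ _ _ _ _ _ (by omega)).trans w2
  have w4 : win ((a : ZMod n) + (p : ZMod n) + (q : ZMod n) + (r : ZMod n) + (t : ZMod n)) u v p q r = s := by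
    exact (win_rot _ _ _ _ _ _ _ (by omega)).trans w3
  have w5 : win ((a : ZMod n) + (p : ZMod n) + (q : ZMod n) + (r : ZMod n) + (t : ZMod n) + (u : ZMod n)) v p q r t = s := by
    exact (win_rot _ _ _ _ _ _ _ (by omega)).trans w4
  have hc := s1 {p, q, r, t, u, v} (by simp) (by simp; omega)
  have hmem : sel {p, q, r, t, u, v} ∈ ({p, q, r, t, u, v} : Multiset ℕ) := by
    rw [← Multiset.count_pos]; omega
  have e1 : ({q, r, t, u, v, p} : Multiset ℕ) = {p, q, r, t, u, v} := by
    simp only [Multiset.insert_eq_cons, ← Multiset.singleton_add]; abel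
  have e2 : ({r, t, u, v, p, q} : Multiset ℕ) = {p, q, r, t, u, v} := by
    simp only [Multiset.insert_eq_cons, ← Multiset.singleton_add]; abel
  have e3 : ({t, u, v, p, q, r} : Multiset ℕ) = {p, q, r, t, u, v} := by
    simp only [Multiset.insert_eq_cons, ← Multiset.singleton_add]; abel
  have e4 : ({u, v, p, q, r, t} : Multiset ℕ) = {p, q, r, t, u, v} := by
    simp only [Multiset.insert_eq_cons, ← Multiset.singleton_add]; abel
  have e5 : ({v, p, q, r, t, u} : Multiset ℕ) = {p, q, r, t, u, v} := by
    simp only [Multiset.insert_eq_cons, ← Multiset.singleton_add]; abel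
  generalize hz : sel {p, q, r, t, u, v} = z at hmem
  have hmem' : z = p ∨ z = q ∨ z = r ∨ z = t ∨ z = u ∨ z = v := by simpa using hmem
  rcases hmem' with h | h | h | h | h | h <;> rw [h] at hz
  · exact ⟨_, q, r, t, u, v, p, by omega, by rw [e1, hz], w1⟩
  · exact ⟨_, r, t, u, v, p, q, by omega, by rw [e2, hz], w2⟩
  · exact ⟨_, t, u, v, p, q, r, by omega, by rw [e3, hz], w3⟩
  · exact ⟨_, u, v, p, q, r, t, by omega, by rw [e4, hz], w4⟩
  · exact ⟨_, v, p, q, r, t, u, by omega, by rw [e5, hz], w5⟩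
  · exact ⟨_, p, q, r, t, u, v, by omega, hz, w0⟩

/-- Rotation of the first five entries of a difference vector. -/
def rotFun (D : Fin 6 → ℕ) : Fin 6 → ℕ := ![D 1, D 2, D 3, D 4, D 0, D 5]

theorem rotFun_mem (n : ℕ) (sel : Multiset ℕ → ℕ) (D : Fin 6 → ℕ) (h : D ∈ diffs n sel) :
    rotFun D ∈ diffs n sel := by
  rw [mem_diffs] at h ⊢
  change D 1 + D 2 + D 3 + D 4 + D 0 + D 5 = n ∧ sel {D 1, D 2, D 3, D 4, D 0, D 5} = D 5
  have e1 : ({D 1, D 2, D 3, D 4, D 0, D 5} : Multiset ℕ) =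
      {D 0, D 1, D 2, D 3, D 4, D 5} := by
    simp only [Multiset.insert_eq_cons, ← Multiset.singleton_add]; abel
  rw [e1]
  exact ⟨by omega, h.2⟩

theorem rotFun_inj (D D' : Fin 6 → ℕ) (h : rotFun D = rotFun D') : D = D' := by
  have h0 := congrFun h 0
  have h1 := congrFun h 1
  have h2 := congrFun h 2
  have h3 := congrFun h 3
  have h4 := congrFun h 4
  have h5 := congrFun h 5
  change D 1 = D' 1 at h0
  change D 2 = D' 2 at h1
  change D 3 = D' 3 at h2
  change D 4 = D' 4 at h3
  change D 0 = D' 0 at h4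
  change D 5 = D' 5 at h5
  ext i
  fin_cases i <;> assumption

/-- The tail of an edge. -/
def tailE {n : ℕ} {sel : Multiset ℕ → ℕ} (p : ZMod n × diffs n sel) :
    ZMod n × ℕ × ℕ × ℕ × ℕ :=
  (p.1, p.2.1 0, p.2.1 1, p.2.1 2, p.2.1 3)

def rotE {n : ℕ} {sel : Multiset ℕ → ℕ} (p : ZMod n × diffs n sel) : ZMod n × diffs n sel :=
  (p.1 + p.2.1 0, ⟨rotFun p.2.1, rotFun_mem n sel _ p.2.2⟩)

theorem rotE_inj {n : ℕ} {sel : Multiset ℕ → ℕ} :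
    Function.Injective (rotE : ZMod n × diffs n sel → ZMod n × diffs n sel) := by
  rintro ⟨x, D, hD⟩ ⟨x', D', hD'⟩ h
  simp only [rotE, Prod.mk.injEq, Subtype.mk.injEq] at h
  obtain ⟨h1, h2⟩ := h
  have := rotFun_inj _ _ h2
  subst this
  simpa using h1

theorem conn_edges (n : ℕ) [NeZero n] (hn : 11 ≤ n) (h2 : n % 2 ≠ 0)
    (sel : Multiset ℕ → ℕ)
    (s1 : ∀ D : Multiset ℕ, D.card = 6 → D.sum = n → D.count (sel D) = 1)
    (s2 : ∀ (D : Multiset ℕ) (v : ℕ) (R : Multiset ℕ), D = v ::ₘ R → (∀ w ∈ R, w < v) →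
      0 ∈ R → sel D = v)
    (s3 : ∀ (D : Multiset ℕ) (M : ℕ), D = {M + 1, M, 1, 1, 1, 1} → 3 ≤ M → sel D = M)
    (s4 : ∀ D : Multiset ℕ, D.card = 6 → D.sum = n → sel D = 0 → ∀ v, D.count v = 1 → v = 0) :
    ∃ e0 : ZMod n × diffs n sel, ∀ S : Set (ZMod n × diffs n sel), e0 ∈ S →
      (∀ e, e ∈ S ↔ rotE e ∈ S) → (∀ e e', tailE e = tailE e' → e ∈ S → e' ∈ S) →
      ∀ e, e ∈ S := by
  refine ⟨(0, ⟨![0, 0, 0, 0, 0, n], ?_⟩), ?_⟩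
  · rw [mem_diffs]
    change 0 + 0 + 0 + 0 + 0 + n = n ∧ sel {0, 0, 0, 0, 0, n} = n
    refine ⟨by omega, s2 _ n {0, 0, 0, 0, 0} ?_ ?_ (by simp)⟩
    · simp only [Multiset.insert_eq_cons, ← Multiset.singleton_add]; abel
    · intro w hw; simp at hw; omega
  intro S hS0 hrot htail
  let K : ZMod n → ℕ → ℕ → ℕ → ℕ → Prop := fun x a b c d =>
    ∃ e ∈ S, tailE e = (x, a, b, c, d)
  have hK : ∀ x a b c d e f, a + b + c + d + e + f = n → sel {a, b, c, d, e, f} = f →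
      (K x a b c d ↔ K (x + a) b c d e) := by
    intro x a b c d e f hs hsel
    let g : ZMod n × diffs n sel := (x, ⟨![a, b, c, d, e, f], by
      rw [mem_diffs]; exact ⟨hs, hsel⟩⟩)
    have t1 : tailE g = (x, a, b, c, d) := rfl
    have t2 : tailE (rotE g) = (x + a, b, c, d, e) := rfl
    constructor
    · rintro ⟨e', he', ht⟩
      exact ⟨rotE g, (hrot g).1 (htail e' g (ht.trans t1.symm) he'), t2⟩
    · rintro ⟨e', he', ht⟩
      exact ⟨g, (hrot g).2 (htail e' _ (ht.trans t2.symm) he'), t1⟩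
  have hK0 : K 0 0 0 0 0 := ⟨_, hS0, rfl⟩
  have hK1 : ∀ x, K x 0 0 0 0 → K (x + 1) 0 0 0 0 := by
    intro x hx
    have hsel : sel {0, 0, 0, 0, 1, n - 1} = n - 1 := by
      refine s2 _ (n - 1) {0, 0, 0, 0, 1} ?_ ?_ (by simp)
      · simp only [Multiset.insert_eq_cons, ← Multiset.singleton_add]; abel
      · intro w hw; simp at hw; omega
    have e1 : ({0, 0, 0, 1, 0, n - 1} : Multiset ℕ) = {0, 0, 0, 0, 1, n - 1} := by
      simp only [Multiset.insert_eq_cons, ← Multiset.singleton_add]; abel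
    have e2 : ({0, 0, 1, 0, 0, n - 1} : Multiset ℕ) = {0, 0, 0, 0, 1, n - 1} := by
      simp only [Multiset.insert_eq_cons, ← Multiset.singleton_add]; abel
    have e3 : ({0, 1, 0, 0, 0, n - 1} : Multiset ℕ) = {0, 0, 0, 0, 1, n - 1} := by
      simp only [Multiset.insert_eq_cons, ← Multiset.singleton_add]; abel
    have e4 : ({1, 0, 0, 0, 0, n - 1} : Multiset ℕ) = {0, 0, 0, 0, 1, n - 1} := by
      simp only [Multiset.insert_eq_cons, ← Multiset.singleton_add]; abel
    have k1 := (hK _ 0 0 0 0 1 (n - 1) (by omega) hsel).1 hx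
    have k2 := (hK _ 0 0 0 1 0 (n - 1) (by omega) (by rw [e1, hsel])).1 k1
    have k3 := (hK _ 0 0 1 0 0 (n - 1) (by omega) (by rw [e2, hsel])).1 k2
    have k4 := (hK _ 0 1 0 0 0 (n - 1) (by omega) (by rw [e3, hsel])).1 k3
    have k5 := (hK _ 1 0 0 0 0 (n - 1) (by omega) (by rw [e4, hsel])).1 k4
    simpa using k5
  have hK2 : ∀ k : ℕ, K (k : ZMod n) 0 0 0 0 := by
    intro k
    induction k with
    | zero => simpa using hK0
    | succ k ih => simpa using hK1 _ ih
  have hP := conn_P n hn h2 sel s1 s2 s3 s4 (fun a b c d => ∀ x, K x a b c d)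
    (fun x => by simpa using hK2 x.val)
    (by
      intro a b c d e f hs hsel
      constructor
      · intro h x
        have := (hK (x - a) a b c d e f hs hsel).1 (h _)
        simpa using this
      · intro h x
        exact (hK x a b c d e f hs hsel).2 (h _))
  rintro ⟨x, D, hD⟩
  have hD' := (mem_diffs n sel D).1 hD
  obtain ⟨e', he', ht⟩ := hP _ _ _ _ _ _ hD'.1 hD'.2 x
  exact htail e' _ ht he'

theorem mcycle_zmod (n : ℕ) (hn : 11 ≤ n) (h6 : Nat.gcd n 6 = 1) (m : ℕ)
    (hm : m = (n + 6 - 1).choose 6) :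
    ∃ a : ZMod m → ZMod n, ∀ s : Multiset (ZMod n), Multiset.card s = 6 →
      ∃! i : ZMod m, (Multiset.range 6).map (fun j => a (i + (j : ZMod m))) = s := by
  classical
  have : NeZero n := ⟨by omega⟩
  have h2 : n % 2 ≠ 0 := by
    intro h
    have : 2 ∣ Nat.gcd n 6 := Nat.dvd_gcd (Nat.dvd_of_mod_eq_zero h) (by norm_num)
    rw [h6] at this; norm_num at this
  have h3 : n % 3 ≠ 0 := by
    intro h
    have : 3 ∣ Nat.gcd n 6 := Nat.dvd_gcd (Nat.dvd_of_mod_eq_zero h) (by norm_num)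
    rw [h6] at this; norm_num at this
  obtain ⟨sel, s1, s2, s3, s4⟩ := exists_sel n h2 h3
  have hcard : Fintype.card (ZMod n × diffs n sel) = m := by
    rw [Fintype.card_prod, ZMod.card, Fintype.card_coe, hm]
    exact card_edges n (by omega) _ (card_sel n sel s1)
  have hm0 : 0 < m := by rw [hm]; exact Nat.choose_pos (by omega)
  have : NeZero m := ⟨hm0.ne'⟩
  obtain ⟨e0, he0⟩ := conn_edges n hn h2 sel s1 s2 s3 s4
  let τ : Equiv.Perm (ZMod n × diffs n sel) :=
    Equiv.ofBijective rotE (Finite.injective_iff_bijective.1 rotE_inj)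
  obtain ⟨σ, hσ, hcyc⟩ := euler_circuit tailE τ e0 (by
    intro S h0 hτ htl
    refine he0 S h0 (fun e => ⟨hτ e, fun h => ?_⟩) htl
    have hpow : ∀ k : ℕ, (τ ^ k) (τ e) ∈ S := by
      intro k
      induction k with
      | zero => exact h
      | succ k ih => rw [pow_succ', Equiv.Perm.mul_apply]; exact hτ _ ih
    have := hpow (orderOf τ - 1)
    rw [← Equiv.Perm.mul_apply, ← pow_succ, Nat.sub_add_cancel (orderOf_pos τ),
      pow_orderOf_eq_one] at this
    exact this)
  have hon : σ.IsCycleOn ((Finset.univ : Finset (ZMod n × diffs n sel)) : Set _) := by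
    refine ⟨by simpa using σ.bijective, ?_⟩
    intro x _ y _
    exact (hcyc x).symm.trans (hcyc y)
  let E : ℕ → ZMod n × diffs n sel := fun k => (σ ^ k) e0
  have hEmod : ∀ k l : ℕ, k ≡ l [MOD m] → E k = E l := by
    intro k l h
    refine (hon.pow_apply_eq_pow_apply (Finset.mem_univ e0)).2 ?_
    rwa [Finset.card_univ, hcard]
  have hEsurj : ∀ e, ∃ k < m, E k = e := by
    intro e
    obtain ⟨k, hk, h⟩ := hon.exists_pow_eq (Finset.mem_univ e0) (Finset.mem_univ e)
    rw [Finset.card_univ, hcard] at hk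
    exact ⟨k, hk, h⟩
  let F : ZMod m → ZMod n × diffs n sel := fun i => E i.val
  have hFsurj : Function.Surjective F := by
    intro e
    obtain ⟨k, hk, h⟩ := hEsurj e
    refine ⟨(k : ZMod m), ?_⟩
    simp only [F]
    rw [ZMod.val_natCast, Nat.mod_eq_of_lt hk, h]
  have hFbij : Function.Bijective F :=
    (Fintype.bijective_iff_surjective_and_card F).2 ⟨hFsurj, by rw [hcard, ZMod.card]⟩
  have hstep : ∀ k, tailE (E (k + 1)) = tailE (rotE (E k)) := by
    intro k
    simp only [E]
    rw [pow_succ', Equiv.Perm.mul_apply, hσ]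
    rfl
  have hx : ∀ k, (E (k + 1)).1 = (E k).1 + ((E k).2.1 0 : ℕ) := fun k =>
    congrArg (fun t => t.1) (hstep k)
  have hd0 : ∀ k, (E (k + 1)).2.1 0 = (E k).2.1 1 := fun k =>
    congrArg (fun t => t.2.1) (hstep k)
  have hd1 : ∀ k, (E (k + 1)).2.1 1 = (E k).2.1 2 := fun k =>
    congrArg (fun t => t.2.2.1) (hstep k)
  have hd2 : ∀ k, (E (k + 1)).2.1 2 = (E k).2.1 3 := fun k =>
    congrArg (fun t => t.2.2.2.1) (hstep k)
  have hd3 : ∀ k, (E (k + 1)).2.1 3 = (E k).2.1 4 := fun k =>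
    congrArg (fun t => t.2.2.2.2) (hstep k)
  let W : ZMod n × diffs n sel → Sym (ZMod n) 6 := fun p =>
    ⟨win p.1 (p.2.1 0) (p.2.1 1) (p.2.1 2) (p.2.1 3) (p.2.1 4), by simp [win]⟩
  have hWsurj : Function.Surjective W := by
    rintro ⟨s, hs⟩
    obtain ⟨x, a, b, c, d, e, f, hsum, hsel, hw⟩ := win_surj n (by omega) sel s1 s hs
    refine ⟨(x, ⟨![a, b, c, d, e, f], by rw [mem_diffs]; exact ⟨hsum, hsel⟩⟩), ?_⟩
    apply Subtype.ext
    exact hw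
  have hWbij : Function.Bijective W := by
    refine (Fintype.bijective_iff_surjective_and_card W).2 ⟨hWsurj, ?_⟩
    rw [hcard, Sym.card_sym_eq_choose, ZMod.card, hm]
  have hwin : ∀ i : ZMod m, (Multiset.range 6).map
      (fun j => (F (i + (j : ZMod m))).1) = (W (F i) : Multiset (ZMod n)) := by
    intro i
    have hF : ∀ j : ℕ, F (i + (j : ZMod m)) = E (i.val + j) := by
      intro j
      apply hEmod
      rw [← ZMod.natCast_eq_natCast_iff]
      simp
    have hlift : ((Multiset.range 6 >>= fun a => pure (a : ZMod m)) : Multiset (ZMod m)) =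
        (Multiset.range 6).map (fun a : ℕ => (a : ZMod m)) := by
      exact Multiset.bind_singleton _ _
    rw [hlift, Multiset.map_map]
    refine (Multiset.map_congr (g := fun j : ℕ => (E (i.val + j)).1) rfl
      (fun j _ => congrArg Prod.fst (hF j))).trans ?_
    change _ = win (E i.val).1 ((E i.val).2.1 0) ((E i.val).2.1 1) ((E i.val).2.1 2)
      ((E i.val).2.1 3) ((E i.val).2.1 4)
    generalize i.val = k
    have r6 : Multiset.range 6 = {0, 1, 2, 3, 4, 5} := by decide
    rw [r6]
    have y0 : (E (k + 0)).1 = (E k).1 := rfl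
    have y1 : (E (k + 1)).1 = (E k).1 + ((E k).2.1 0 : ℕ) := hx k
    have y2 : (E (k + 2)).1 = (E (k + 1)).1 + ((E k).2.1 1 : ℕ) := by
      rw [← hd0 k]; exact hx (k + 1)
    have y3 : (E (k + 3)).1 = (E (k + 2)).1 + ((E k).2.1 2 : ℕ) := by
      rw [← hd1 k, ← hd0 (k + 1)]; exact hx (k + 2)
    have y4 : (E (k + 4)).1 = (E (k + 3)).1 + ((E k).2.1 3 : ℕ) := by
      rw [← hd2 k, ← hd1 (k + 1), ← hd0 (k + 2)]; exact hx (k + 3)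
    have y5 : (E (k + 5)).1 = (E (k + 4)).1 + ((E k).2.1 4 : ℕ) := by
      rw [← hd3 k, ← hd2 (k + 1), ← hd1 (k + 2), ← hd0 (k + 3)]; exact hx (k + 4)
    simp only [Multiset.insert_eq_cons, Multiset.map_cons, Multiset.map_singleton, win]
    rw [y5, y4, y3, y2, y1, y0]
  refine ⟨fun i => (F i).1, ?_⟩
  intro s hs
  obtain ⟨i, hi, huniq⟩ := (hWbij.comp hFbij).existsUnique ⟨s, hs⟩
  refine ⟨i, ?_, ?_⟩
  · exact (hwin i).trans (congrArg Subtype.val hi)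
  · intro i' hi'
    apply huniq
    apply Subtype.ext
    exact (hwin i').symm.trans hi'

theorem six_mcycle_exists (n : ℕ) (hn : 11 ≤ n) (h6 : Nat.gcd n 6 = 1) :
    ∃ a : ZMod ((n + 6 - 1).choose 6) → Fin n, IsMcycle n 6 a := by
  obtain ⟨k, rfl⟩ : ∃ k, n = k + 1 := ⟨n - 1, by omega⟩
  exact mcycle_zmod (k + 1) hn h6 _ rfl
end

section
/- For every integer n ≥ 4, a 3-Mcycle of [n] exists if and only if n divides the binomial coefficient C(n+2, 3). -/
theorem euler_merge {T V : Type*} [Fintype T] [DecidableEq T] (src tgt : T → V)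
    (σ₀ : Equiv.Perm T) (h₀ : ∀ t, src (σ₀ t) = tgt t) (t₀ : T)
    (hconn : ∀ S : Set T, t₀ ∈ S → (∀ t ∈ S, ∀ t', src t' = src t → t' ∈ S) →
      (∀ t ∈ S, ∀ t', src t' = tgt t → t' ∈ S) → ∀ t, t ∈ S) :
    ∃ σ : Equiv.Perm T, (∀ t, src (σ t) = tgt t) ∧ ∀ t, σ.SameCycle t₀ t := by
  classical
  let P : Finset (Equiv.Perm T) := Finset.univ.filter (fun σ => ∀ t, src (σ t) = tgt t)
  let O : Equiv.Perm T → Finset T := fun σ => Finset.univ.filter (fun t => σ.SameCycle t₀ t)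
  have hP : P.Nonempty := ⟨σ₀, by simpa [P] using h₀⟩
  obtain ⟨σ, hσP, hmax⟩ := P.exists_max_image (fun σ => (O σ).card) hP
  have hσ : ∀ t, src (σ t) = tgt t := by simpa [P] using hσP
  refine ⟨σ, hσ, ?_⟩
  by_contra hne
  have hex : ∃ t t', σ.SameCycle t₀ t ∧ ¬ σ.SameCycle t₀ t' ∧ src t' = src t := by
    by_contra hno
    push Not at hno
    have key : ∀ t, σ.SameCycle t₀ t → ∀ t', src t' = src t → σ.SameCycle t₀ t' := by
      intro t ht t' h
      by_contra h'
      exact hno t t' ht h' h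
    apply hne
    apply hconn {t | σ.SameCycle t₀ t} (Equiv.Perm.SameCycle.refl _ _) key
    intro t ht t' h
    refine key (σ t) ?_ t' (by rw [h, hσ])
    exact Equiv.Perm.sameCycle_apply_right.2 ht
  obtain ⟨t, t', ht, ht', hs⟩ := hex
  let τ : Equiv.Perm T := Equiv.swap t t' * σ
  have hτP : τ ∈ P := by
    simp only [P, Finset.mem_filter, Finset.mem_univ, true_and]
    intro u
    rw [← hσ u]
    show src (Equiv.swap t t' (σ u)) = _
    by_cases h1 : σ u = t
    · rw [h1, Equiv.swap_apply_left, hs]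
    by_cases h2 : σ u = t'
    · rw [h2, Equiv.swap_apply_right, hs]
    rw [Equiv.swap_apply_of_ne_of_ne h1 h2]
  have hτ1 : ∀ u, σ u ≠ t → σ u ≠ t' → τ u = σ u := fun u h1 h2 =>
    Equiv.swap_apply_of_ne_of_ne h1 h2
  have hpow : ∀ k : ℕ, τ.SameCycle t ((σ ^ k) t) := by
    intro k
    induction k with
    | zero => exact Equiv.Perm.SameCycle.refl _ _
    | succ k ih =>
      rw [pow_succ', Equiv.Perm.mul_apply]
      by_cases h1 : σ ((σ ^ k) t) = t
      · rw [h1]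
      have h2 : σ ((σ ^ k) t) ≠ t' := by
        intro h2
        apply ht'
        rw [← h2]
        apply Equiv.Perm.sameCycle_apply_right.2
        exact Equiv.Perm.sameCycle_pow_right.2 ht
      rw [← hτ1 _ h1 h2]
      exact Equiv.Perm.sameCycle_apply_right.2 ih
  have hall : ∀ u, σ.SameCycle t u → τ.SameCycle t u := by
    intro u hu
    obtain ⟨k, hk⟩ := hu.exists_nat_pow_eq
    rw [← hk]
    exact hpow k
  have h0 : τ.SameCycle t t₀ := hall _ ht.symm
  have ht'2 : τ.SameCycle t t' := by
    have h1 : σ.SameCycle t (σ⁻¹ t) := ⟨-1, by simp⟩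
    have h2 := Equiv.Perm.sameCycle_apply_right.2 (hall _ h1)
    have h3 : τ (σ⁻¹ t) = t' := by
      simp [τ]
    rwa [h3] at h2
  have hss : O σ ⊂ O τ := by
    rw [Finset.ssubset_iff_of_subset]
    · exact ⟨t', by simpa [O] using h0.symm.trans ht'2, by simpa [O] using ht'⟩
    · intro u hu
      simp only [O, Finset.mem_filter, Finset.mem_univ, true_and] at hu ⊢
      exact h0.symm.trans (hall u (ht.symm.trans hu))
  exact absurd (hmax τ hτP) (not_le.2 (Finset.card_lt_card hss))

def OmitLast (n x y z : ℕ) : Prop :=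
  x = y ∨ (x ≠ y ∧ y ≠ z ∧ x ≠ z ∧ ((x < z ∧ y < z ∧ 2 * z ≠ n) ∨
    (z < x ∧ y < z ∧ 2 * x = n) ∨ (z < y ∧ x < z ∧ 2 * y = n)))

theorem OmitLast.symm' {n x y z : ℕ} (h : OmitLast n x y z) : OmitLast n y x z := by
  unfold OmitLast at *; omega

theorem omit_exists (n x y z : ℕ) (h : x + y + z = n) :
    OmitLast n x y z ∨ OmitLast n y z x ∨ OmitLast n z x y := by
  unfold OmitLast
  by_cases h1 : x = y
  · exact Or.inl (Or.inl h1)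
  by_cases h2 : y = z
  · exact Or.inr (Or.inl (Or.inl h2))
  by_cases h3 : z = x
  · exact Or.inr (Or.inr (Or.inl h3))
  have h2' := Ne.symm h2
  have h3' := Ne.symm h3
  have h1' := Ne.symm h1
  simp only [h1, h2, h3, h1', h2', h3', ne_eq, not_false_eq_true, true_and, false_or]
  rcases lt_or_gt_of_ne h1 with h1 | h1 <;> rcases lt_or_gt_of_ne h2 with h2 | h2 <;>
    rcases lt_or_gt_of_ne h3 with h3 | h3 <;> omega

theorem omit_unique (n x y z : ℕ) (h : x + y + z = n) (h3 : ¬ 3 ∣ n)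
    (h1 : OmitLast n x y z) (h2 : OmitLast n y z x) : False := by
  unfold OmitLast at *; omega

def addMod (n a x : ℕ) : ℕ := if a + x < n then a + x else a + x - n

set_option maxHeartbeats 4000000 in
theorem rot_of_perm (n a x y a' x' y' : ℕ) (ha : a < n) (ha' : a' < n) (hx : x < n) (hx' : x' < n)
   (hy : y < n) (hy' : y' < n) (hxy : x + y ≤ n) (hxy' : x' + y' ≤ n) (b c b' c' : ℕ)
   (hb : b = addMod n a x) (hc : c = addMod n b y)
   (hb' : b' = addMod n a' x') (hc' : c' = addMod n b' y')
   (hp : (a = a' ∧ b = b' ∧ c = c') ∨ (a = a' ∧ b = c' ∧ c = b') ∨ (a = b' ∧ b = a' ∧ c = c')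
     ∨ (a = b' ∧ b = c' ∧ c = a') ∨ (a = c' ∧ b = a' ∧ c = b') ∨ (a = c' ∧ b = b' ∧ c = a')) :
   (a' = a ∧ x' = x ∧ y' = y) ∨ (x' = y ∧ y' = n - x - y) ∨ (x' = n - x - y ∧ y' = x) := by
  unfold addMod at *
  rcases hp with h | h | h | h | h | h <;> obtain ⟨h1, h2, h3⟩ := h <;> subst h1 h2 h3 <;>
   split_ifs at * <;> omega

def addFin {n : ℕ} (a x : Fin n) : Fin n :=
  ⟨addMod n a x, by unfold addMod; split_ifs <;> omega⟩

theorem addFin_comm {n : ℕ} (a x y : Fin n) :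
    addFin (addFin a x) y = addFin (addFin a y) x := by
  apply Fin.ext
  simp only [addFin, addMod]
  split_ifs <;> omega

/-- Edges: base point `a`, steps `x` and `y`. -/
abbrev EdgeT (n : ℕ) : Type :=
  {t : Fin n × Fin n × Fin n // (t.2.1 : ℕ) + t.2.2 ≤ n ∧
    OmitLast n t.2.1 t.2.2 (n - t.2.1 - t.2.2)}

def edgeWin {n : ℕ} (t : EdgeT n) : Multiset (Fin n) :=
  {t.1.1, addFin t.1.1 t.1.2.1, addFin (addFin t.1.1 t.1.2.1) t.1.2.2}

theorem pair_eq' {α : Type*} (b c b' c' : α) (h : ({b, c} : Multiset α) = {b', c'}) :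
    (b = b' ∧ c = c') ∨ (b = c' ∧ c = b') := by
  have hb : b ∈ ({b', c'} : Multiset α) := by rw [← h]; simp
  simp only [Multiset.insert_eq_cons, Multiset.mem_cons, Multiset.mem_singleton] at hb
  rcases hb with rfl | rfl
  · left
    simpa [Multiset.insert_eq_cons] using h
  · right
    rw [Multiset.pair_comm b' b] at h
    simpa [Multiset.insert_eq_cons] using h

theorem triple_eq {α : Type*} (a b c a' b' c' : α)
    (h : ({a, b, c} : Multiset α) = {a', b', c'}) :
    (a = a' ∧ b = b' ∧ c = c') ∨ (a = a' ∧ b = c' ∧ c = b') ∨ (a = b' ∧ b = a' ∧ c = c')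
     ∨ (a = b' ∧ b = c' ∧ c = a') ∨ (a = c' ∧ b = a' ∧ c = b') ∨ (a = c' ∧ b = b' ∧ c = a') := by
  have ha : a ∈ ({a', b', c'} : Multiset α) := by rw [← h]; simp
  simp only [Multiset.insert_eq_cons, Multiset.mem_cons, Multiset.mem_singleton] at ha
  rcases ha with rfl | rfl | rfl
  · have := pair_eq' b c b' c' ((Multiset.cons_inj_right _).1 h)
    tauto
  · have h' : ({a', a, c'} : Multiset α) = {a, a', c'} := Multiset.cons_swap _ _ _
    rw [h'] at h
    have := pair_eq' b c a' c' ((Multiset.cons_inj_right _).1 h)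
    tauto
  · have h' : ({a', b', a} : Multiset α) = {a, a', b'} := by
      rw [Multiset.pair_comm b' a]; exact Multiset.cons_swap _ _ _
    rw [h'] at h
    have := pair_eq' b c a' b' ((Multiset.cons_inj_right _).1 h)
    tauto

theorem range_three_cast (m : ℕ) :
    (do let a ← Multiset.range 3
        pure (a : ZMod m)) = ({0, 1, 2} : Multiset (ZMod m)) := by
  have : (do let a ← Multiset.range 3
             pure (a : ZMod m)) =
      ({((0 : ℕ) : ZMod m), ((1 : ℕ) : ZMod m), ((2 : ℕ) : ZMod m)} : Multiset (ZMod m)) := rfl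
  rw [this]
  norm_num

theorem edgeWin_inj {n : ℕ} (h3 : ¬ 3 ∣ n) (t t' : EdgeT n) (h : edgeWin t = edgeWin t') :
    t = t' := by
  obtain ⟨⟨a, x, y⟩, hxy, ho⟩ := t
  obtain ⟨⟨a', x', y'⟩, hxy', ho'⟩ := t'
  simp only [edgeWin] at hxy ho hxy' ho' h
  have := triple_eq _ _ _ _ _ _ h
  simp only [Fin.ext_iff] at this
  have key := rot_of_perm n a x y a' x' y' a.2 a'.2 x.2 x'.2 y.2 y'.2 hxy hxy' _ _ _ _
    rfl rfl rfl rfl this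
  rcases key with ⟨h1, h2, h3⟩ | ⟨h1, h2⟩ | ⟨h1, h2⟩
  · rw [← Fin.ext_iff] at h1 h2 h3
    subst h1 h2 h3; rfl
  · exfalso
    rw [h1, h2] at ho'
    have e : n - y - (n - x - y) = x := by omega
    rw [e] at ho'
    exact omit_unique n x y (n - x - y) (by omega) h3 ho ho'
  · exfalso
    rw [h1, h2] at ho'
    have e : n - (n - x - y) - x = y := by omega
    rw [e] at ho'
    exact omit_unique n (n - x - y) x y (by omega) h3 ho' ho

theorem edgeWin_surj_sorted {n : ℕ} (p q r : Fin n) (h1 : p ≤ q) (h2 : q ≤ r) :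
    ∃ t : EdgeT n, edgeWin t = {p, q, r} := by
  have h1' : (p : ℕ) ≤ q := h1
  have h2' : (q : ℕ) ≤ r := h2
  have hr := r.2
  have hn : ¬ 3 ∣ n ∨ 3 ∣ n := by tauto
  rcases omit_exists n (q - p) (r - q) (n - (r - p)) (by omega) with h | h | h
  · refine ⟨⟨⟨p, ⟨q - p, by omega⟩, ⟨r - q, by omega⟩⟩, ?_, ?_⟩, ?_⟩
    · simp; omega
    · simp only []
      convert h using 1; omega
    · have e1 : addFin p ⟨q - p, by omega⟩ = q := by
        apply Fin.ext; simp only [addFin, addMod]; split_ifs <;> omega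
      have e2 : addFin q ⟨r - q, by omega⟩ = r := by
        apply Fin.ext; simp only [addFin, addMod]; split_ifs <;> omega
      simp only [edgeWin, e1, e2]
  · have hlt : n - (r - p : ℕ) < n := by
      by_contra hh
      unfold OmitLast at h
      omega
    refine ⟨⟨⟨q, ⟨r - q, by omega⟩, ⟨n - (r - p), hlt⟩⟩, ?_, ?_⟩, ?_⟩
    · simp; omega
    · simp only []
      convert h using 1; omega
    · have e1 : addFin q ⟨r - q, by omega⟩ = r := by
        apply Fin.ext; simp only [addFin, addMod]; split_ifs <;> omega
      have e2 : addFin r ⟨n - (r - p), hlt⟩ = p := by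
        apply Fin.ext; simp only [addFin, addMod]; split_ifs <;> omega
      simp only [edgeWin, e1, e2]
      ext z; simp [Multiset.insert_eq_cons, Multiset.count_cons, Multiset.count_singleton]; ring
  · have hlt : n - (r - p : ℕ) < n := by
      by_contra hh
      unfold OmitLast at h
      omega
    refine ⟨⟨⟨r, ⟨n - (r - p), hlt⟩, ⟨q - p, by omega⟩⟩, ?_, ?_⟩, ?_⟩
    · simp; omega
    · simp only []
      convert h using 1; omega
    · have e1 : addFin r ⟨n - (r - p), hlt⟩ = p := by
        apply Fin.ext; simp only [addFin, addMod]; split_ifs <;> omega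
      have e2 : addFin p ⟨q - p, by omega⟩ = q := by
        apply Fin.ext; simp only [addFin, addMod]; split_ifs <;> omega
      simp only [edgeWin, e1, e2]
      ext z; simp [Multiset.insert_eq_cons, Multiset.count_cons, Multiset.count_singleton]; ring

theorem edgeWin_surj {n : ℕ} (s : Multiset (Fin n)) (hs : Multiset.card s = 3) :
    ∃ t : EdgeT n, edgeWin t = s := by
  have hl : (s.sort (· ≤ ·)).length = 3 := by rw [Multiset.length_sort, hs]
  have hp := s.pairwise_sort (· ≤ ·)
  have he := s.sort_eq (· ≤ ·)
  generalize s.sort (· ≤ ·) = l at *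
  match l, hl with
  | [p, q, r], _ =>
    simp at hp
    obtain ⟨t, ht⟩ := edgeWin_surj_sorted p q r hp.1.1 hp.2
    exact ⟨t, by rw [ht, ← he]; rfl⟩

noncomputable def sigmaZero (n : ℕ) : Equiv.Perm (EdgeT n) :=
  Equiv.ofBijective (fun t => ⟨(addFin t.1.1 t.1.2.1, t.1.2.2, t.1.2.1), by
      have := t.2.1; simp only []; omega, by
      have := t.2.2.symm'; simp only []; convert this using 1; omega⟩) (by
    apply Function.Injective.bijective_of_finite
    rintro ⟨⟨a, x, y⟩, h⟩ ⟨⟨a', x', y'⟩, h'⟩ hh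
    simp only [Subtype.mk.injEq, Prod.mk.injEq] at hh ⊢
    obtain ⟨h1, rfl, rfl⟩ := hh
    refine ⟨?_, rfl, rfl⟩
    apply Fin.ext
    have := congrArg Fin.val h1
    simp only [addFin, addMod] at this
    split_ifs at this <;> omega)

theorem edge_conn {n : ℕ} (hn : 5 ≤ n) (h3 : ¬ 3 ∣ n) (S : Set (EdgeT n)) (t₀ : EdgeT n)
    (h0 : t₀ ∈ S)
    (hs : ∀ t ∈ S, ∀ t' : EdgeT n, (t'.1.1, t'.1.2.1) = (t.1.1, t.1.2.1) → t' ∈ S)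
    (ht : ∀ t ∈ S, ∀ t' : EdgeT n,
      (t'.1.1, t'.1.2.1) = (addFin t.1.1 t.1.2.1, t.1.2.2) → t' ∈ S) :
    ∀ t, t ∈ S := by
  -- `Q a x`: every edge out of the vertex `(a, x)` is in `S`
  let Q : Fin n → Fin n → Prop := fun a x => ∀ t : EdgeT n, t.1.1 = a → t.1.2.1 = x → t ∈ S
  have step : ∀ a x y : Fin n, Q a x → (x : ℕ) + y ≤ n → OmitLast n x y (n - x - y) →
      Q (addFin a x) y := by
    intro a x y hQ h1 h2 t e1 e2
    refine ht ⟨(a, x, y), h1, h2⟩ (hQ _ rfl rfl) t ?_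
    simp only [e1, e2]
  have out_le : ∀ t : EdgeT n, 2 * (t.1.2.1 : ℕ) ≤ n := by
    rintro ⟨⟨a, x, y⟩, h1, h2⟩
    simp only [] at h1 h2 ⊢
    unfold OmitLast at h2
    omega
  let z : Fin n := ⟨0, by omega⟩
  let o : Fin n := ⟨1, by omega⟩
  have az : ∀ a, addFin a z = a := by
    intro a; apply Fin.ext; simp only [addFin, addMod, z]; split_ifs <;> omega
  have toZ : ∀ a x, Q a x → 2 * (x : ℕ) < n → Q (addFin a x) z := by
    intro a x h hx
    apply step _ _ _ h
    · simp only [z]; omega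
    · simp only [z]; unfold OmitLast; omega
  have fromZ : ∀ a x : Fin n, Q a z → 2 * (x : ℕ) < n → Q a x := by
    intro a x h hx
    have := step a z x h (by simp only [z]; omega) (by simp only [z]; unfold OmitLast; omega)
    rwa [az] at this
  have hQ0 : Q t₀.1.1 t₀.1.2.1 := by
    intro t e1 e2
    exact hs t₀ h0 t (by rw [e1, e2])
  have exZ : ∃ a, Q a z := by
    have := out_le t₀
    rcases this.lt_or_eq with h | h
    · exact ⟨_, toZ _ _ hQ0 h⟩
    · have := step _ _ o hQ0 (by simp only [o]; omega) (by simp only [o]; unfold OmitLast; omega)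
      exact ⟨_, toZ _ _ this (by simp only [o]; omega)⟩
  obtain ⟨a, ha⟩ := exZ
  have hk : ∀ k : ℕ, Q ⟨(a + k) % n, Nat.mod_lt _ (by omega)⟩ z := by
    intro k
    induction k with
    | zero =>
      convert ha using 1
      apply Fin.ext; simp [Nat.mod_eq_of_lt a.2]
    | succ k ih =>
      have h1 := fromZ _ o ih (by simp only [o]; omega)
      have h2 := toZ _ _ h1 (by simp only [o]; omega)
      convert h2 using 1
      apply Fin.ext
      simp only [addFin, addMod, o]
      have := Nat.mod_lt (a + k) (show 0 < n by omega)
      rw [← add_assoc, Nat.add_mod, Nat.mod_eq_of_lt (show 1 < n by omega)]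
      split_ifs with h
      · exact Nat.mod_eq_of_lt h
      · rw [show (↑a + k) % n + 1 = n by omega]; simp
  have allZ : ∀ b, Q b z := by
    intro b
    convert hk (n - a + b) using 1
    apply Fin.ext
    simp only []
    rw [show (a + (n - a + b) : ℕ) = n + b by omega]
    simp [Nat.mod_eq_of_lt b.2]
  intro t
  rcases (out_le t).lt_or_eq with h | h
  · exact fromZ _ _ (allZ t.1.1) h t rfl rfl
  · -- half step
    let b : Fin n := ⟨(t.1.1 + (n - 1)) % n, Nat.mod_lt _ (by omega)⟩
    have hb : addFin b o = t.1.1 := by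
      apply Fin.ext
      simp only [addFin, addMod, o, b]
      have h1 := t.1.1.2
      rcases Nat.eq_zero_or_pos (t.1.1 : ℕ) with h0 | h0
      · rw [h0, Nat.mod_eq_of_lt (by omega)]; split_ifs <;> omega
      · rw [show (t.1.1 + (n - 1) : ℕ) = n + (t.1.1 - 1) by omega, Nat.add_mod_left,
          Nat.mod_eq_of_lt (by omega)]; split_ifs <;> omega
    have h1 := fromZ _ o (allZ b) (by simp only [o]; omega)
    have h2 := step _ _ t.1.2.1 h1 (by simp only [o]; omega)
      (by simp only [o]; unfold OmitLast; omega)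
    rw [hb] at h2
    exact h2 t rfl rfl

theorem card_edgeT {n : ℕ} (h3 : ¬ 3 ∣ n) :
    Nat.card (EdgeT n) = (n + 3 - 1).choose 3 := by
  have e : EdgeT n ≃ Sym (Fin n) 3 := Equiv.ofBijective
    (fun t => ⟨edgeWin t, by simp [edgeWin]⟩) ⟨by
      intro t t' h
      exact edgeWin_inj h3 t t' (congrArg Subtype.val h), by
      intro s
      obtain ⟨t, ht⟩ := edgeWin_surj s.1 s.2
      exact ⟨t, Subtype.ext ht⟩⟩
  rw [Nat.card_congr e, Nat.card_eq_fintype_card, Sym.card_sym_eq_choose, Fintype.card_fin]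

theorem exists_of_not_dvd (n : ℕ) (hn : 5 ≤ n) (h3 : ¬ 3 ∣ n) :
    ∃ a : ZMod ((n + 3 - 1).choose 3) → Fin n, IsMcycle n 3 a := by
  classical
  have hcard := card_edgeT h3
  have hm : 1 < (n + 3 - 1).choose 3 := by
    have : Nat.choose 5 3 ≤ (n + 3 - 1).choose 3 := Nat.choose_le_choose 3 (by omega)
    have h5 : Nat.choose 5 3 = 10 := by decide
    omega
  unfold IsMcycle
  generalize (n + 3 - 1).choose 3 = m at *
  have : NeZero m := ⟨by omega⟩
  have : Fact (1 < m) := ⟨hm⟩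
  have : Fintype (EdgeT n) := Fintype.ofFinite _
  obtain ⟨t₀, -⟩ := edgeWin_surj (n := n) (Multiset.replicate 3 ⟨0, by omega⟩) (by simp)
  obtain ⟨σ, hσ, hcyc⟩ := euler_merge (fun t : EdgeT n => (t.1.1, t.1.2.1))
    (fun t => (addFin t.1.1 t.1.2.1, t.1.2.2)) (sigmaZero n) (fun t => rfl) t₀
    (fun S h0 hs ht => edge_conn hn h3 S t₀ h0 hs ht)
  have hc : σ.IsCycleOn ((Finset.univ : Finset (EdgeT n)) : Set (EdgeT n)) := by
    refine ⟨by simpa using σ.bijective, ?_⟩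
    intro x _ y _
    exact (hcyc x).symm.trans (hcyc y)
  have hcu : (Finset.univ : Finset (EdgeT n)).card = m := by
    rw [Finset.card_univ, ← Nat.card_eq_fintype_card, hcard]
  have hper : (σ ^ m) t₀ = t₀ := by
    rw [← hcu]; exact hc.pow_card_apply (Finset.mem_univ _)
  let f : ZMod m → EdgeT n := fun i => (σ ^ i.val) t₀
  have hmod : ∀ k : ℕ, (σ ^ (k % m)) t₀ = (σ ^ k) t₀ := by
    intro k
    conv_rhs => rw [← Nat.mod_add_div k m, pow_add, Equiv.Perm.mul_apply, pow_mul]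
    congr 1
    generalize k / m = j
    induction j with
    | zero => rfl
    | succ j ih => rw [pow_succ, Equiv.Perm.mul_apply, hper]; exact ih
  have hf1 : ∀ i, f (i + 1) = σ (f i) := by
    intro i
    simp only [f]
    rw [ZMod.val_add, hmod, ZMod.val_one, pow_succ', Equiv.Perm.mul_apply]
  have hsurj : Function.Surjective f := by
    intro t
    obtain ⟨k, hk, h⟩ := hc.exists_pow_eq (Finset.mem_univ t₀) (Finset.mem_univ t)
    refine ⟨(k : ZMod m), ?_⟩
    simp only [f]
    rw [ZMod.val_natCast, hmod, h]
  have hbij : Function.Bijective f := by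
    rw [Fintype.bijective_iff_surjective_and_card]
    refine ⟨hsurj, ?_⟩
    rw [ZMod.card, ← hcu, Finset.card_univ]
  have hwin : ∀ i : ZMod m, (Multiset.range 3).map (fun j => (f (i + (j : ZMod m))).1.1)
      = edgeWin (f i) := by
    intro i
    have e1 := hσ (f i)
    have e2 := hσ (σ (f i))
    simp only [Prod.mk.injEq] at e1 e2
    rw [range_three_cast]
    simp only [Multiset.insert_eq_cons, Multiset.map_cons, Multiset.map_singleton, edgeWin]
    have i2 : i + (2 : ZMod m) = i + 1 + 1 := by ring
    rw [i2, hf1, hf1, add_zero, hf1, e2.1, e1.1, e1.2]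
  refine ⟨fun i => (f i).1.1, ?_⟩
  intro s hs
  obtain ⟨t, ht⟩ := edgeWin_surj s hs
  obtain ⟨i, hi⟩ := hsurj t
  refine ⟨i, ?_, ?_⟩
  · simp only []; rw [hwin, hi, ht]
  · intro i' hi'
    simp only [] at hi'
    rw [hwin, ← ht, ← hi] at hi'
    exact hbij.1 (edgeWin_inj h3 _ _ hi')

theorem dvd_of_exists (n : ℕ) (hn : 4 ≤ n)
    (h : ∃ a : ZMod ((n + 3 - 1).choose 3) → Fin n, IsMcycle n 3 a) :
    n ∣ (n + 3 - 1).choose 3 := by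
  classical
  obtain ⟨a, ha⟩ := h
  have hcs : Fintype.card (Sym (Fin n) 3) = (n + 3 - 1).choose 3 := by
    rw [Sym.card_sym_eq_choose, Fintype.card_fin]
  have hm : 0 < (n + 3 - 1).choose 3 := Nat.choose_pos (by omega)
  unfold IsMcycle at ha
  generalize (n + 3 - 1).choose 3 = m at *
  have : NeZero m := ⟨by omega⟩
  let w : ZMod m → Sym (Fin n) 3 := fun i =>
    ⟨(Multiset.range 3).map (fun j => a (i + (j : ZMod m))), by simp⟩
  have hw : Function.Bijective w := by
    constructor
    · intro i j hij
      exact (ha (w j).1 (w j).2).unique (congrArg Subtype.val hij) rfl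
    · intro s
      obtain ⟨i, hi, -⟩ := ha s.1 s.2
      exact ⟨i, Subtype.ext hi⟩
  let N : Fin n → ℕ := fun x => ∑ i : ZMod m, if x = a i then 1 else 0
  have h1 : ∀ x, ∑ s : Sym (Fin n) 3, Multiset.count x s.1 = 3 * N x := by
    intro x
    rw [← hw.sum_comp (fun s : Sym (Fin n) 3 => Multiset.count x s.1)]
    have hsh : ∀ c : ZMod m, (∑ i : ZMod m, if x = a (i + c) then 1 else 0) = N x := by
      intro c
      exact Equiv.sum_comp (Equiv.addRight c) (fun i => if x = a i then 1 else 0)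
    have : ∀ i, Multiset.count x (w i).1 = (if x = a (i + 2) then 1 else 0)
        + (if x = a (i + 1) then 1 else 0) + (if x = a (i + 0) then 1 else 0) := by
      intro i
      simp only [w, range_three_cast, Multiset.insert_eq_cons, Multiset.map_cons, Multiset.map_singleton,
        Multiset.count_cons, Multiset.count_singleton]
    simp only [this]
    rw [Finset.sum_add_distrib, Finset.sum_add_distrib, hsh, hsh, hsh]
    ring
  have h2 : ∀ x y, N x = N y := by
    intro x y
    have : ∑ s : Sym (Fin n) 3, Multiset.count x s.1 = ∑ s : Sym (Fin n) 3, Multiset.count y s.1 := by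
      rw [← (Sym.equivCongr (n := 3) (Equiv.swap x y)).sum_comp
        (fun s : Sym (Fin n) 3 => Multiset.count y s.1)]
      apply Finset.sum_congr rfl
      intro s _
      show _ = Multiset.count y (Multiset.map (Equiv.swap x y) s.1)
      have hc := Multiset.count_map_eq_count' (Equiv.swap x y) s.1 (Equiv.swap x y).injective x
      rw [Equiv.swap_apply_left] at hc
      exact hc.symm
    rw [h1, h1] at this
    omega
  have h3 : ∑ x, N x = m := by
    simp only [N]
    rw [Finset.sum_comm]
    simp [ZMod.card]
  refine ⟨N ⟨0, by omega⟩, ?_⟩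
  refine h3.symm.trans ?_
  rw [Finset.sum_congr rfl (fun x _ => h2 x ⟨0, by omega⟩)]
  simp

theorem exists_four : ∃ a : ZMod ((4 + 3 - 1).choose 3) → Fin 4, IsMcycle 4 3 a := by
  have e : (4 + 3 - 1).choose 3 = 20 := by decide
  unfold IsMcycle
  rw [e]
  let a : ZMod 20 → Fin 4 :=
    (![0, 0, 0, 1, 1, 1, 2, 0, 2, 0, 3, 1, 3, 1, 2, 2, 2, 3, 3, 3] : Fin 20 → Fin 4)
  have hex : ∀ p q r : Fin 4, ∃ i : ZMod 20,
      ({a i, a (i + 1), a (i + 2)} : Multiset (Fin 4)) = {p, q, r} := by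
    decide +kernel
  have hwin : ∀ i : ZMod 20, (Multiset.range 3).map (fun j => a (i + (j : ZMod 20))) =
      {a i, a (i + 1), a (i + 2)} := by
    intro i
    rw [range_three_cast]
    simp only [Multiset.insert_eq_cons, Multiset.map_cons, Multiset.map_singleton, add_zero]
  let w : ZMod 20 → Sym (Fin 4) 3 := fun i => ⟨{a i, a (i + 1), a (i + 2)}, by simp⟩
  have hsurj : Function.Surjective w := by
    intro s
    obtain ⟨p, q, r, h⟩ := Multiset.card_eq_three.1 s.2
    obtain ⟨i, hi⟩ := hex p q r
    exact ⟨i, Subtype.ext (hi.trans h.symm)⟩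
  have hbij : Function.Bijective w := by
    rw [Fintype.bijective_iff_surjective_and_card]
    refine ⟨hsurj, ?_⟩
    rw [ZMod.card, Sym.card_sym_eq_choose, Fintype.card_fin, e]
  refine ⟨a, ?_⟩
  intro s hs
  obtain ⟨i, hi⟩ := hsurj ⟨s, hs⟩
  refine ⟨i, ?_, ?_⟩
  · simp only []; rw [hwin]; exact congrArg Subtype.val hi
  · intro j hj
    rw [hwin] at hj
    apply hbij.1
    rw [hi]
    exact Subtype.ext hj

theorem not_three_dvd (n : ℕ) (hn : 4 ≤ n) (h : n ∣ (n + 2).choose 3) : ¬ 3 ∣ n := by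
  rintro ⟨k, rfl⟩
  obtain ⟨c, hc⟩ := h
  have h6 : (3 * k + 2).choose 3 * 6 = (3 * k + 2) * (3 * k + 1) * (3 * k) := by
    have h1 := Nat.descFactorial_eq_factorial_mul_choose (3 * k + 2) 3
    simp [Nat.descFactorial, Nat.factorial] at h1
    rw [mul_comm, ← h1]
    have : 3 * k + 2 - 2 = 3 * k := by omega
    ring
  rw [hc] at h6
  have h7 : 3 * k * (c * 6) = 3 * k * ((3 * k + 2) * (3 * k + 1)) := by rw [← mul_assoc, h6]; ring
  have h8 := Nat.eq_of_mul_eq_mul_left (by omega) h7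
  have h9 : (3 * k + 2) * (3 * k + 1) = 3 * (3 * k * k + 3 * k) + 2 := by ring
  omega

theorem three_mcycle_iff_dvd (n : ℕ) (hn : 4 ≤ n) :
    (∃ a : ZMod ((n + 3 - 1).choose 3) → Fin n, IsMcycle n 3 a) ↔ n ∣ (n + 2).choose 3 := by
  constructor
  · exact dvd_of_exists n hn
  · intro h
    rcases hn.eq_or_lt with rfl | h5
    · exact exists_four
    · exact exists_of_not_dvd n h5 (not_three_dvd n hn h)
end
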